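/- (Theorem 1, correctness of parallel SGRAND termination) Assume ℓ_i ≥ 0 for all i and ℓ_{r_1} ≤ ℓ_{r_2} ≤ … ≤ ℓ_{r_N}. Let V ⊆ F_2^N be an arbitrary set of valid error patterns, and let E, S ⊆ F_2^N be such that every element of F_2^N lies in E ∪ S ∪ {descendants of elements of S}. Suppose e* ∈ E ∩ V satisfies ζ(e*) ≤ ζ(e) for all e ∈ E ∩ V, and ζ(e*) < ζ(s) for all s ∈ S. Then ζ(e*) ≤ ζ(e) for all e ∈ V; that is, e* minimizes the soft weight over all valid error patterns. -/

import Mathlib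

open scoped BigOperators

/-- `j*(e)`: the (1-indexed) largest position `j` with `e_{r_j} = 1`; `j*(0) = 0`. -/
def jstar {N : ℕ} (r : Equiv.Perm (Fin N)) (e : Fin N → ZMod 2) : ℕ :=
  (Finset.univ.filter fun j : Fin N => e (r j) = 1).sup fun j => (j : ℕ) + 1

/-- The child relation of the EP tree on `F₂^N`: the root `0` has a single child
(the vector with a `1` in coordinate `r_1`); a nonzero `e` with `j*(e) < N` has a
left child (coordinate `r_{j*}` set to `0`, coordinate `r_{j*+1}` set to `1`) and a
right child (coordinate `r_{j*+1}` set to `1`); a node with `j*(e) = N` has no children. -/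
def Child {N : ℕ} (r : Equiv.Perm (Fin N)) (e c : Fin N → ZMod 2) : Prop :=
  (e = 0 ∧ ∃ h : 0 < N,
    c = Function.update (0 : Fin N → ZMod 2) (r ⟨0, h⟩) 1) ∨
  (e ≠ 0 ∧ ∃ h : jstar r e < N,
    c = Function.update
        (Function.update e (r ⟨jstar r e - 1, lt_of_le_of_lt (Nat.sub_le _ _) h⟩) 0)
        (r ⟨jstar r e, h⟩) 1 ∨
    c = Function.update e (r ⟨jstar r e, h⟩) 1)

/-- Soft weight of an error pattern: `ζ(e) = Σ_{i : e_i = 1} ℓ_i`. -/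
noncomputable def zeta {N : ℕ} (ℓ : Fin N → ℝ) (e : Fin N → ZMod 2) : ℝ :=
  ∑ i, if e i = 1 then ℓ i else 0

/-!
The soft weight never decreases from a node of the EP tree to its children: the right child gains a
nonnegative term, and the left child trades the term at position `j*` for the term at position
`j* + 1`, which is at least as large because the reliabilities are sorted. A bound on `S` therefore
extends to all descendants of `S`.
-/

section SoftWeight

variable {N : ℕ} {ℓ : Fin N → ℝ} {e : Fin N → ZMod 2} {i j : Fin N}

theorem zeta_update_one_of_ne_one (hi : e i ≠ 1) :
    zeta ℓ (Function.update e i 1) = zeta ℓ e + ℓ i := by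
  have gain_at_i : ∀ k, (if Function.update e i 1 k = 1 then ℓ k else 0) =
      (if e k = 1 then ℓ k else 0) + if k = i then ℓ k else 0 := by
    intro k
    obtain rfl | hk := eq_or_ne k i
    · simp [hi]
    · simp [hk]
  simp only [zeta, gain_at_i, Finset.sum_add_distrib, Finset.sum_ite_eq', Finset.mem_univ, if_true]

theorem zeta_le_zeta_update_one (hi : 0 ≤ ℓ i) : zeta ℓ e ≤ zeta ℓ (Function.update e i 1) := by
  by_cases he : e i = 1
  · rw [← he, Function.update_eq_self]
  · rw [zeta_update_one_of_ne_one he]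
    exact le_add_of_nonneg_right hi

theorem zeta_le_zeta_update_zero_update_one (hi : 0 ≤ ℓ i) (hij : ℓ i ≤ ℓ j) (hj : e j ≠ 1) :
    zeta ℓ e ≤ zeta ℓ (Function.update (Function.update e i 0) j 1) := by
  have cleared_i : Function.update e i 0 i ≠ 1 := by simp
  have cleared_j : Function.update e i 0 j ≠ 1 := by
    rw [Function.update_apply]
    split_ifs
    exacts [zero_ne_one, hj]
  calc
    zeta ℓ e ≤ zeta ℓ (Function.update e i 1) := zeta_le_zeta_update_one hi
    _ = zeta ℓ (Function.update e i 0) + ℓ i := by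
      rw [← zeta_update_one_of_ne_one cleared_i, Function.update_idem]
    _ ≤ zeta ℓ (Function.update e i 0) + ℓ j := by gcongr
    _ = zeta ℓ (Function.update (Function.update e i 0) j 1) :=
      (zeta_update_one_of_ne_one cleared_j).symm

end SoftWeight

section EPTree

variable {N : ℕ} {r : Equiv.Perm (Fin N)} {ℓ : Fin N → ℝ} {e c : Fin N → ZMod 2}

theorem lt_jstar_of_apply_eq_one {j : Fin N} (hj : e (r j) = 1) : (j : ℕ) < jstar r e :=
  Finset.le_sup (f := fun k : Fin N => (k : ℕ) + 1) (by simpa using hj)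

theorem apply_jstar_ne_one (h : jstar r e < N) : e (r ⟨jstar r e, h⟩) ≠ 1 :=
  fun h_one => (lt_jstar_of_apply_eq_one h_one).false

theorem zeta_le_of_child (hℓ : 0 ≤ ℓ) (hmono : Monotone (ℓ ∘ r)) (hchild : Child r e c) :
    zeta ℓ e ≤ zeta ℓ c := by
  rcases hchild with ⟨rfl, -, rfl⟩ | ⟨-, h, rfl | rfl⟩
  · exact zeta_le_zeta_update_one (hℓ _)
  · have sorted_step : ℓ (r ⟨jstar r e - 1, by lia⟩) ≤ ℓ (r ⟨jstar r e, h⟩) :=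
      hmono (Nat.sub_le (jstar r e) 1)
    exact zeta_le_zeta_update_zero_update_one (hℓ _) sorted_step (apply_jstar_ne_one h)
  · exact zeta_le_zeta_update_one (hℓ _)

theorem zeta_le_of_transGen_child (hℓ : 0 ≤ ℓ) (hmono : Monotone (ℓ ∘ r))
    (hdesc : Relation.TransGen (Child r) e c) : zeta ℓ e ≤ zeta ℓ c := by
  induction hdesc with
  | single hchild => exact zeta_le_of_child hℓ hmono hchild
  | tail _ hchild ih => exact ih.trans (zeta_le_of_child hℓ hmono hchild)

theorem stmt13_general (hℓ : 0 ≤ ℓ) (hmono : Monotone (ℓ ∘ r)) {V E S : Set (Fin N → ZMod 2)}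
    (hcover : ∀ e ∈ V, e ∈ E ∨ e ∈ S ∨ ∃ s ∈ S, Relation.TransGen (Child r) s e)
    {a : ℝ} (hE : ∀ e ∈ E ∩ V, a ≤ zeta ℓ e) (hS : ∀ s ∈ S, a ≤ zeta ℓ s) :
    ∀ e ∈ V, a ≤ zeta ℓ e := by
  intro e heV
  rcases hcover e heV with heE | heS | ⟨s, hs, hdesc⟩
  · exact hE e ⟨heE, heV⟩
  · exact hS e heS
  · exact (hS s hs).trans (zeta_le_of_transGen_child hℓ hmono hdesc)

end EPTree

/-- Theorem 1, correctness of parallel SGRAND termination: with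
nonnegative reliabilities sorted along `r`, let `V` be any set of valid error
patterns, and `E, S` be such that every element of `F₂^N` lies in
`E ∪ S ∪ {descendants of elements of S}`. If `e* ∈ E ∩ V` satisfies
`ζ(e*) ≤ ζ(e)` for all `e ∈ E ∩ V` and `ζ(e*) < ζ(s)` for all `s ∈ S`, then
`ζ(e*) ≤ ζ(e)` for all `e ∈ V`. -/
theorem stmt13 {N : ℕ} (r : Equiv.Perm (Fin N)) (ℓ : Fin N → ℝ)
    (hnn : ∀ i, 0 ≤ ℓ i)
    (hsorted : ∀ i j : Fin N, i ≤ j → ℓ (r i) ≤ ℓ (r j))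
    (V E S : Set (Fin N → ZMod 2))
    (hcover : ∀ e : Fin N → ZMod 2,
      e ∈ E ∨ e ∈ S ∨ ∃ s ∈ S, Relation.TransGen (Child r) s e)
    (estar : Fin N → ZMod 2) (hstar : estar ∈ E ∩ V)
    (hmin1 : ∀ e ∈ E ∩ V, zeta ℓ estar ≤ zeta ℓ e)
    (hmin2 : ∀ s ∈ S, zeta ℓ estar < zeta ℓ s) :
    ∀ e ∈ V, zeta ℓ estar ≤ zeta ℓ e :=
  stmt13_general hnn hsorted (fun e _ => hcover e) hmin1 fun s hs => (hmin2 s hs).le
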